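/- arXiv:2112.05604 — 4 statements merged into one kernel-verified Lean document; each statement's English description precedes it below -/
import Mathlib

section
/- (Proposition 2.2(a), stationarity conversion) Let ε ≥ 0 and suppose the pair (x̂, ŷ) satisfies max_y f(x̂,y) − f(x̂,ŷ) ≤ ε²/(l·κ), and suppose ‖∇_x f(x̂, y⋆)‖ ≤ ε for some maximizer y⋆ ∈ Argmax_y f(x̂, y). Then ‖∇_y f(x̂, ŷ)‖ ≤ √2·ε and ‖∇_x f(x̂, ŷ)‖ ≤ (1 + √2)·ε. -/
open MeasureTheory Real

/-- Partial gradient of `f` in the first (primal) variable. -/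
noncomputable def gradx {d1 d2 : ℕ}
    (f : EuclideanSpace ℝ (Fin d1) → EuclideanSpace ℝ (Fin d2) → ℝ)
    (x : EuclideanSpace ℝ (Fin d1)) (y : EuclideanSpace ℝ (Fin d2)) :
    EuclideanSpace ℝ (Fin d1) :=
  gradient (fun x' => f x' y) x

/-- Partial gradient of `f` in the second (dual) variable. -/
noncomputable def grady {d1 d2 : ℕ}
    (f : EuclideanSpace ℝ (Fin d1) → EuclideanSpace ℝ (Fin d2) → ℝ)
    (x : EuclideanSpace ℝ (Fin d1)) (y : EuclideanSpace ℝ (Fin d2)) :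
    EuclideanSpace ℝ (Fin d2) :=
  gradient (f x) y

/-- The primal function `Φ(x) = max_y f(x,y)`. -/
noncomputable def primal {d1 d2 : ℕ}
    (f : EuclideanSpace ℝ (Fin d1) → EuclideanSpace ℝ (Fin d2) → ℝ)
    (x : EuclideanSpace ℝ (Fin d1)) : ℝ :=
  ⨆ y, f x y

/-!
Fix `x`. The Polyak–Łojasiewicz inequality says that `√(Φ x - f x ·)` has slope at least `√(μ/2)`
wherever it is positive. Ekeland's variational principle turns this into quadratic growth:
`μ/2 · dist(y, S)² ≤ Φ x - f x y`, where `S` is the set of maximizers of `f x`. With the assumed gap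
this reads `l · dist(ŷ, S) ≤ √2 ε`. It remains to compare the derivatives at `ŷ` with those at a
point of `S`: there the `y`-derivative vanishes, and the `x`-derivative does not depend on the
maximizer, because for two maximizers `y`, `z` at `x̂` the Polyak–Łojasiewicz inequality gives
`f x z ≤ Φ x ≤ f x y + O(‖x - x̂‖²)`.
-/

open Set Filter Metric Topology

section Ekeland

variable {X : Type*} [MetricSpace X] {φ : X → ℝ} {c : ℝ} {x y : X}

/-- The section below `x` of the Ekeland order associated with `φ` and `c`: the points reached from
`x` by a move along which `φ` decreases by at least `c` times the length of the move. -/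
def descentSet (φ : X → ℝ) (c : ℝ) (x : X) : Set X :=
  {w | φ w + c * dist w x ≤ φ x}

lemma mem_descentSet : y ∈ descentSet φ c x ↔ φ y + c * dist y x ≤ φ x := Iff.rfl

lemma self_mem_descentSet : x ∈ descentSet φ c x := by
  simp [mem_descentSet]

lemma descentSet_subset_of_mem (hc : 0 ≤ c) (hy : y ∈ descentSet φ c x) :
    descentSet φ c y ⊆ descentSet φ c x := by
  intro w hw
  rw [mem_descentSet] at *
  linarith [mul_le_mul_of_nonneg_left (dist_triangle w y x) hc]

lemma isClosed_descentSet (hφ : LowerSemicontinuous φ) :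
    IsClosed (descentSet φ c x) :=
  (hφ.add (Continuous.lowerSemicontinuous (by fun_prop))).isClosed_preimage (φ x)

lemma exists_mem_descentSet_subset_closedBall (hφ : BddBelow (range φ)) (hc : 0 < c) {δ : ℝ}
    (hδ : 0 < δ) (x : X) :
    ∃ y ∈ descentSet φ c x, descentSet φ c y ⊆ closedBall y δ := by
  have hne : (descentSet φ c x).Nonempty := ⟨x, self_mem_descentSet⟩
  obtain ⟨_, ⟨y, hy, rfl⟩, hlt⟩ := Real.lt_sInf_add_pos (hne.image φ) (mul_pos hc hδ)
  refine ⟨y, hy, fun w hw => le_of_mul_le_mul_left ?_ hc⟩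
  have hinf : sInf (φ '' descentSet φ c x) ≤ φ w :=
    csInf_le (hφ.mono (image_subset_range _ _))
      (mem_image_of_mem φ (descentSet_subset_of_mem hc.le hy hw))
  linarith [mem_descentSet.mp hw]

theorem ekeland_variational_principle [CompleteSpace X] (hφ : LowerSemicontinuous φ)
    (hbdd : BddBelow (range φ)) (hc : 0 < c) (x₀ : X) :
    ∃ z, φ z + c * dist z x₀ ≤ φ x₀ ∧ ∀ w, w ≠ z → φ z < φ w + c * dist w z := by
  choose next next_mem next_ball using fun n : ℕ =>
    exists_mem_descentSet_subset_closedBall hbdd hc (pow_pos (one_half_pos (α := ℝ)) n)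
  let u : ℕ → X := fun n => Nat.rec x₀ next n
  have hanti : Antitone fun n => descentSet φ c (u n) :=
    antitone_nat_of_succ_le fun n => descentSet_subset_of_mem hc.le (next_mem n (u n))
  have hdist {n : ℕ} {w : X} (hw : w ∈ descentSet φ c (u (n + 1))) :
      dist w (u (n + 1)) ≤ (1 / 2) ^ n :=
    next_ball n (u n) hw
  have hradius : Tendsto (fun n : ℕ => (1 / 2 : ℝ) ^ n) atTop (𝓝 0) :=
    tendsto_pow_atTop_nhds_zero_of_lt_one (by norm_num) (by norm_num)
  have hcauchy : CauchySeq fun n => u (n + 1) :=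
    cauchySeq_of_le_tendsto_0' _ (fun n m hnm => by
      rw [dist_comm]
      exact hdist (hanti (Nat.succ_le_succ hnm) self_mem_descentSet)) hradius
  obtain ⟨z, hz⟩ := cauchySeq_tendsto_of_complete hcauchy
  have hz_mem (n : ℕ) : z ∈ descentSet φ c (u n) :=
    (isClosed_descentSet hφ).mem_of_tendsto hz <| (eventually_ge_atTop n).mono fun m hm =>
      hanti (hm.trans m.le_succ) self_mem_descentSet
  refine ⟨z, hz_mem 0, fun w hwz => not_le.mp fun hw => hwz ?_⟩
  have hw_lim : Tendsto (fun n => u (n + 1)) atTop (𝓝 w) := by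
    refine tendsto_iff_dist_tendsto_zero.mpr
      (squeeze_zero (fun _ => dist_nonneg) (fun n => ?_) hradius)
    rw [dist_comm]
    exact hdist (descentSet_subset_of_mem hc.le (hz_mem (n + 1)) hw)
  exact tendsto_nhds_unique hw_lim hz

end Ekeland

section OneSidedBounds

variable {E : Type*} [NormedAddCommGroup E] [NormedSpace ℝ E]

theorem norm_le_of_hasFDerivAt_of_eventually_sub_le {g : E → ℝ} {g' : E →L[ℝ] ℝ} {x : E} {K : ℝ}
    (hg : HasFDerivAt g g' x) (hK : 0 ≤ K) (hle : ∀ᶠ w in 𝓝 x, g w - g x ≤ K * ‖w - x‖) :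
    ‖g'‖ ≤ K := by
  have happly (v : E) : g' v ≤ K * ‖v‖ := by
    have hline : Tendsto (fun t : ℝ => x + t • v) (𝓝[>] 0) (𝓝 x) :=
      (Continuous.tendsto' (by fun_prop) 0 x (by simp)).mono_left nhdsWithin_le_nhds
    refine le_of_tendsto (hg.hasLineDerivAt v).tendsto_slope_zero_right ?_
    filter_upwards [hline.eventually hle, self_mem_nhdsWithin] with t ht (htpos : 0 < t)
    rw [add_sub_cancel_left, norm_smul, Real.norm_of_nonneg htpos.le] at ht
    rw [smul_eq_mul, inv_mul_le_iff₀ htpos]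
    linarith
  refine g'.opNorm_le_bound hK fun v => abs_le.mpr ⟨?_, happly v⟩
  have := happly (-v)
  rw [map_neg, norm_neg] at this
  linarith

theorem hasFDerivAt_eq_of_eventually_le_add_sq {u v : E → ℝ} {u' v' : E →L[ℝ] ℝ} {x : E}
    {C : ℝ} (hu : HasFDerivAt u u' x) (hv : HasFDerivAt v v' x) (hx : u x = v x)
    (hle : ∀ᶠ w in 𝓝 x, u w ≤ v w + C * ‖w - x‖ ^ 2) : u' = v' := by
  suffices h : ∀ K > 0, ‖u' - v'‖ ≤ K from
    sub_eq_zero.mp (norm_le_zero_iff.mp (le_of_forall_gt_imp_ge_of_dense h))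
  intro K hK
  have hsmall : ∀ᶠ w in 𝓝 x, C * ‖w - x‖ < K :=
    (Continuous.tendsto' (by fun_prop) x 0 (by simp)).eventually_lt_const hK
  refine norm_le_of_hasFDerivAt_of_eventually_sub_le (hu.sub hv) hK.le ?_
  filter_upwards [hle, hsmall] with w hw hwK
  simp only [Pi.sub_apply, hx, sub_self, sub_zero]
  nlinarith [norm_nonneg (w - x)]

end OneSidedBounds

section ErrorBound

variable {F : Type*} [NormedAddCommGroup F] [NormedSpace ℝ F] [CompleteSpace F]
  {φ : F → ℝ} {c : ℝ}

theorem exists_eq_zero_and_mul_dist_le (hφ : LowerSemicontinuous φ) (hnonneg : ∀ y, 0 ≤ φ y)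
    (hc : 0 < c)
    (hslope : ∀ y, 0 < φ y → ∃ φ' : F →L[ℝ] ℝ, HasFDerivAt φ φ' y ∧ c < ‖φ'‖) (y : F) :
    ∃ z, φ z = 0 ∧ c * dist y z ≤ φ y := by
  obtain ⟨z, hzy, hz⟩ := ekeland_variational_principle hφ
    ⟨0, forall_mem_range.mpr hnonneg⟩ hc y
  refine ⟨z, ?_, by linarith [hnonneg z, dist_comm y z ▸ hzy]⟩
  by_contra hne
  obtain ⟨φ', hφ', hlt⟩ := hslope z ((hnonneg z).lt_of_ne' hne)
  refine hlt.not_ge (norm_neg φ' ▸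
    norm_le_of_hasFDerivAt_of_eventually_sub_le hφ'.neg hc.le (.of_forall fun w => ?_))
  rcases eq_or_ne w z with rfl | hwz
  · simp
  · have := hz w hwz
    rw [dist_eq_norm] at this
    simp only [Pi.neg_apply]
    linarith

theorem zeros_nonempty_and_mul_infDist_le (hφ : LowerSemicontinuous φ) (hnonneg : ∀ y, 0 ≤ φ y)
    (hc : 0 < c)
    (hslope : ∀ y, 0 < φ y → ∃ φ' : F →L[ℝ] ℝ, HasFDerivAt φ φ' y ∧ c ≤ ‖φ'‖) (y : F) :
    {z | φ z = 0}.Nonempty ∧ c * infDist y {z | φ z = 0} ≤ φ y := by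
  have hzero {a : ℝ} (ha : 0 < a) (hac : a < c) : ∃ z, φ z = 0 ∧ a * dist y z ≤ φ y :=
    exists_eq_zero_and_mul_dist_le hφ hnonneg ha
      (fun w hw => (hslope w hw).imp fun _ h => ⟨h.1, hac.trans_le h.2⟩) y
  refine ⟨(hzero (half_pos hc) (half_lt_self hc)).imp fun _ h => h.1, ?_⟩
  -- Ekeland's principle with constant `a` only yields slope at most `a`, so contradicting
  -- a slope of at least `c` requires `a < c`; let `a` increase to `c`.
  have hlim : Tendsto (fun a => a * infDist y {z | φ z = 0}) (𝓝[<] c)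
      (𝓝 (c * infDist y {z | φ z = 0})) :=
    (Continuous.tendsto (by fun_prop) c).mono_left nhdsWithin_le_nhds
  refine le_of_tendsto hlim ?_
  filter_upwards [Ioo_mem_nhdsLT hc] with a ha
  obtain ⟨z, hz, hza⟩ := hzero ha.1 ha.2
  calc a * infDist y {z | φ z = 0} ≤ a * dist y z :=
        mul_le_mul_of_nonneg_left (infDist_le_dist_of_mem (s := {z | φ z = 0}) hz) ha.1.le
    _ ≤ φ y := hza

end ErrorBound

section PolyakLojasiewicz

variable {F : Type*} [NormedAddCommGroup F] [NormedSpace ℝ F] {g : F → ℝ} {M μ : ℝ}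

/-- The Polyak–Łojasiewicz inequality with modulus `μ` for the maximization of `g`. The optimal
value is passed as a number `M`, so that no junk value of a supremum can enter. -/
def PolyakLojasiewicz (g : F → ℝ) (M μ : ℝ) : Prop :=
  ∀ y, 2 * μ * (M - g y) ≤ ‖fderiv ℝ g y‖ ^ 2

namespace PolyakLojasiewicz

lemma exists_hasFDerivAt_sqrt_gap (hPL : PolyakLojasiewicz g M μ) {y : F}
    (hg : DifferentiableAt ℝ g y) (hy : 0 < √(M - g y)) :
    ∃ φ' : F →L[ℝ] ℝ, HasFDerivAt (fun y => √(M - g y)) φ' y ∧ √(μ / 2) ≤ ‖φ'‖ := by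
  have hgap : 0 < M - g y := Real.sqrt_pos.mp hy
  refine ⟨_, (hg.hasFDerivAt.const_sub M).sqrt hgap.ne', Real.sqrt_le_iff.mpr ⟨norm_nonneg _, ?_⟩⟩
  rw [norm_smul, norm_neg, mul_pow, Real.norm_eq_abs, sq_abs, div_pow, mul_pow,
    Real.sq_sqrt hgap.le, one_pow, one_div_mul_eq_div, le_div_iff₀ (by positivity)]
  linarith [hPL y]

theorem argmax_nonempty_and_quadratic_growth [CompleteSpace F] (hPL : PolyakLojasiewicz g M μ)
    (hg : Differentiable ℝ g) (hM : ∀ y, g y ≤ M) (hμ : 0 < μ) (y : F) :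
    {z | g z = M}.Nonempty ∧ μ / 2 * infDist y {z | g z = M} ^ 2 ≤ M - g y := by
  have hcont : Continuous fun y => √(M - g y) := (continuous_const.sub hg.continuous).sqrt
  have hzeros : {z | √(M - g z) = 0} = {z | g z = M} := by
    ext z
    simp only [mem_ofPred_eq, Real.sqrt_eq_zero (sub_nonneg.mpr (hM z)), sub_eq_zero]
    exact eq_comm
  obtain ⟨hne, hdist⟩ := zeros_nonempty_and_mul_infDist_le hcont.lowerSemicontinuous
    (fun y => Real.sqrt_nonneg _) (Real.sqrt_pos.mpr (half_pos hμ))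
    (fun y hy => hPL.exists_hasFDerivAt_sqrt_gap (hg y) hy) y
  rw [hzeros] at hne hdist
  have hsq := pow_le_pow_left₀ (mul_nonneg (Real.sqrt_nonneg _) infDist_nonneg) hdist 2
  rw [mul_pow, Real.sq_sqrt (half_pos hμ).le, Real.sq_sqrt (sub_nonneg.mpr (hM y))] at hsq
  exact ⟨hne, hsq⟩

end PolyakLojasiewicz

end PolyakLojasiewicz

lemma le_mul_infDist {X : Type*} [PseudoMetricSpace X] {s : Set X} {y : X} {a l : ℝ}
    (hs : s.Nonempty) (hl : 0 < l) (h : ∀ z ∈ s, a ≤ l * dist y z) : a ≤ l * infDist y s := by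
  rw [← div_le_iff₀' hl, le_infDist hs]
  exact fun z hz => (div_le_iff₀' hl).mpr (h z hz)

section Minimax

variable {E F : Type*} [NormedAddCommGroup E] [NormedSpace ℝ E]
  [NormedAddCommGroup F] [NormedSpace ℝ F] {f : E → F → ℝ} {Φ : E → ℝ} {l μ : ℝ} {x₀ : E}

lemma fderiv_eq_zero_of_eq_upper_bound {g : F → ℝ} {M : ℝ} {z : F} (hM : ∀ w, g w ≤ M)
    (hz : g z = M) : fderiv ℝ g z = 0 :=
  IsLocalMax.fderiv_eq_zero <| .of_forall fun w => hz ▸ hM w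

theorem fderiv_left_eq_of_maximizers {y z : F} (hμ : 0 < μ)
    (hy_diff : DifferentiableAt ℝ (f · y) x₀) (hz_diff : DifferentiableAt ℝ (f · z) x₀)
    (hlip : ∀ x, ‖fderiv ℝ (f x) y - fderiv ℝ (f x₀) y‖ ≤ l * ‖x - x₀‖)
    (hle : ∀ x y, f x y ≤ Φ x) (hPL : ∀ x, PolyakLojasiewicz (f x) (Φ x) μ)
    (hy : f x₀ y = Φ x₀) (hz : f x₀ z = Φ x₀) :
    fderiv ℝ (f · z) x₀ = fderiv ℝ (f · y) x₀ := by
  refine hasFDerivAt_eq_of_eventually_le_add_sq (C := l ^ 2 / (2 * μ)) hz_diff.hasFDerivAt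
    hy_diff.hasFDerivAt (hz.trans hy.symm) (.of_forall fun x => ?_)
  have hnorm : ‖fderiv ℝ (f x) y‖ ≤ l * ‖x - x₀‖ := by
    simpa only [fderiv_eq_zero_of_eq_upper_bound (hle x₀) hy, sub_zero] using hlip x
  have hgap : Φ x - f x y ≤ l ^ 2 / (2 * μ) * ‖x - x₀‖ ^ 2 := by
    rw [div_mul_eq_mul_div, le_div_iff₀' (by positivity), ← mul_pow]
    exact (hPL x y).trans (pow_le_pow_left₀ (norm_nonneg _) hnorm 2)
  linarith [hle x z]

lemma mul_le_sqrt_two_mul_of_gap_le {gap d ε : ℝ} (hl : 0 < l) (hμ : 0 < μ) (hε : 0 ≤ ε)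
    (hgrowth : μ / 2 * d ^ 2 ≤ gap) (hgap : gap ≤ ε ^ 2 / (l * (l / μ))) : l * d ≤ √2 * ε := by
  refine le_of_sq_le_sq ?_ (by positivity)
  rw [mul_pow, mul_pow, Real.sq_sqrt zero_le_two]
  have h := hgrowth.trans hgap
  rw [le_div_iff₀ (by positivity)] at h
  field_simp at h
  linarith

theorem stationarity_conversion_a_general [CompleteSpace F] {ε : ℝ} {y₀ ystar : F}
    (hl : 0 < l) (hμ : 0 < μ)
    (hdiffx : ∀ y, Differentiable ℝ (f · y)) (hdiffy : ∀ x, Differentiable ℝ (f x))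
    (hlipx : ∀ x₁ x₂ y₁ y₂,
      ‖fderiv ℝ (f · y₁) x₁ - fderiv ℝ (f · y₂) x₂‖ ≤ l * (‖x₁ - x₂‖ + ‖y₁ - y₂‖))
    (hlipy : ∀ x₁ x₂ y₁ y₂,
      ‖fderiv ℝ (f x₁) y₁ - fderiv ℝ (f x₂) y₂‖ ≤ l * (‖x₁ - x₂‖ + ‖y₁ - y₂‖))
    (hΦ : ∀ x, IsLUB (range (f x)) (Φ x)) (hPL : ∀ x, PolyakLojasiewicz (f x) (Φ x) μ)
    (hgap : Φ x₀ - f x₀ y₀ ≤ ε ^ 2 / (l * (l / μ)))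
    (hystar : f x₀ ystar = Φ x₀) (hgx : ‖fderiv ℝ (f · ystar) x₀‖ ≤ ε) :
    ‖fderiv ℝ (f x₀) y₀‖ ≤ √2 * ε ∧ ‖fderiv ℝ (f · y₀) x₀‖ ≤ (1 + √2) * ε := by
  have hle (x : E) (y : F) : f x y ≤ Φ x := (hΦ x).1 (mem_range_self y)
  obtain ⟨hne, hgrowth⟩ :=
    (hPL x₀).argmax_nonempty_and_quadratic_growth (hdiffy x₀) (hle x₀) hμ y₀
  have hdist : l * infDist y₀ {z | f x₀ z = Φ x₀} ≤ √2 * ε :=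
    mul_le_sqrt_two_mul_of_gap_le hl hμ ((norm_nonneg _).trans hgx) hgrowth hgap
  have hy : ‖fderiv ℝ (f x₀) y₀‖ ≤ √2 * ε := by
    refine (le_mul_infDist hne hl fun z hz => ?_).trans hdist
    simpa [fderiv_eq_zero_of_eq_upper_bound (hle x₀) hz, dist_eq_norm] using hlipy x₀ x₀ y₀ z
  have hx : ‖fderiv ℝ (f · y₀) x₀ - fderiv ℝ (f · ystar) x₀‖ ≤ √2 * ε := by
    refine (le_mul_infDist hne hl fun z hz => ?_).trans hdist
    rw [← fderiv_left_eq_of_maximizers hμ (hdiffx ystar x₀) (hdiffx z x₀)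
      (fun x => by simpa using hlipy x x₀ ystar ystar) hle hPL hystar hz]
    simpa [dist_eq_norm] using hlipx x₀ x₀ y₀ z
  exact ⟨hy, by linarith [norm_le_norm_sub_add (fderiv ℝ (f · y₀) x₀) (fderiv ℝ (f · ystar) x₀)]⟩

end Minimax

section Gradient

variable {E : Type*} [NormedAddCommGroup E] [InnerProductSpace ℝ E] [CompleteSpace E]

lemma norm_gradient (u : E → ℝ) (x : E) : ‖gradient u x‖ = ‖fderiv ℝ u x‖ :=
  LinearIsometryEquiv.norm_map _ _

lemma norm_gradient_sub_gradient (u v : E → ℝ) (x y : E) :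
    ‖gradient u x - gradient v y‖ = ‖fderiv ℝ u x - fderiv ℝ v y‖ := by
  rw [gradient, gradient, ← map_sub, LinearIsometryEquiv.norm_map]

end Gradient

section Primal

variable {d1 d2 : ℕ} {f : EuclideanSpace ℝ (Fin d1) → EuclideanSpace ℝ (Fin d2) → ℝ}
  {x : EuclideanSpace ℝ (Fin d1)} {ys : EuclideanSpace ℝ (Fin d2)}

lemma isLUB_primal (hys : ∀ y, f x y ≤ f x ys) : IsLUB (range (f x)) (primal f x) :=
  isLUB_ciSup ⟨f x ys, forall_mem_range.mpr hys⟩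

lemma eq_primal_of_forall_le (hys : ∀ y, f x y ≤ f x ys) : f x ys = primal f x :=
  le_antisymm ((isLUB_primal hys).1 (mem_range_self ys)) (ciSup_le hys)

end Primal

/-- **Proposition 2.2(a) (stationarity conversion).** If `max_y f(x̂,y) − f(x̂,ŷ) ≤ ε²/(lκ)` and
`‖∇_x f(x̂,y⋆)‖ ≤ ε` for some maximizer `y⋆` of `f(x̂,·)`, then `(x̂,ŷ)` is an
`O(ε)`-stationary point of `f`. -/
theorem stationarity_conversion_a
    {d1 d2 : ℕ}
    (f : EuclideanSpace ℝ (Fin d1) → EuclideanSpace ℝ (Fin d2) → ℝ)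
    (l μ : ℝ) (hl : 0 < l) (hμ : 0 < μ)
    (hdiff : Differentiable ℝ
      (fun p : EuclideanSpace ℝ (Fin d1) × EuclideanSpace ℝ (Fin d2) => f p.1 p.2))
    (hlipx : ∀ x₁ x₂ y₁ y₂,
      ‖gradx f x₁ y₁ - gradx f x₂ y₂‖ ≤ l * (‖x₁ - x₂‖ + ‖y₁ - y₂‖))
    (hlipy : ∀ x₁ x₂ y₁ y₂,
      ‖grady f x₁ y₁ - grady f x₂ y₂‖ ≤ l * (‖x₁ - x₂‖ + ‖y₁ - y₂‖))
    (hattain : ∀ x, ∃ ys, ∀ y, f x y ≤ f x ys)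
    (hPL : ∀ x y, 2 * μ * (primal f x - f x y) ≤ ‖grady f x y‖ ^ 2)
    (κ : ℝ) (hκ : κ = l / μ)
    (ε : ℝ) (hε : 0 ≤ ε)
    (xh : EuclideanSpace ℝ (Fin d1)) (yh : EuclideanSpace ℝ (Fin d2))
    (hgap : primal f xh - f xh yh ≤ ε ^ 2 / (l * κ))
    (ystar : EuclideanSpace ℝ (Fin d2)) (hystar : ∀ y, f xh y ≤ f xh ystar)
    (hgx : ‖gradx f xh ystar‖ ≤ ε) :
    ‖grady f xh yh‖ ≤ Real.sqrt 2 * ε ∧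
      ‖gradx f xh yh‖ ≤ (1 + Real.sqrt 2) * ε := by
  simp only [gradx, grady, norm_gradient, norm_gradient_sub_gradient] at hlipx hlipy hPL hgx ⊢
  subst hκ
  exact stationarity_conversion_a_general hl hμ
    (fun y => hdiff.comp (by fun_prop : Differentiable ℝ (fun x => (x, y))))
    (fun x => hdiff.comp (by fun_prop : Differentiable ℝ (fun y => (x, y))))
    hlipx hlipy (fun x => (hattain x).elim fun _ => isLUB_primal) hPL hgap
    (eq_primal_of_forall_le hystar) hgx
end

section
/- (Proposition 2.2(b), Moreau-envelope bound by joint gradients) For any x̃ and ỹ, let prox_{Φ/2l}(x̃) denote the unique minimizer of z ↦ Φ(z) + l·‖z − x̃‖² (which exists and is unique because this function is l-strongly convex under Assumptions 1–2). Then 4·l²·‖x̃ − prox_{Φ/2l}(x̃)‖² ≤ 4·κ·‖∇_y f(x̃, ỹ)‖² + 4·‖∇_x f(x̃, ỹ)‖². -/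
open MeasureTheory Real

/-!
An `l`-Lipschitz gradient makes each `f(·, y)` weakly convex, i.e. `(-l)`-strongly convex, and this
passes to the supremum `Φ`. Hence `Φ + l‖· - x̃‖²` is `l`-strongly convex, and its growth away from
the minimizer `p` gives `Φ(p) + (3l/2)‖x̃ - p‖² ≤ Φ(x̃)`. The same weak convexity bounds
`Φ(p) ≥ f(p, ỹ)` from below by the quadratic minorant of `f(·, ỹ)` at `x̃`, so that
`l‖x̃ - p‖² ≤ (Φ(x̃) - f(x̃, ỹ)) + ‖∇ₓf(x̃, ỹ)‖‖x̃ - p‖`. The PL inequality controls the gap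
`Φ(x̃) - f(x̃, ỹ)`, and Young's inequality absorbs the last term.
-/

open Set Filter Topology
open scoped NNReal Gradient RealInnerProductSpace

section UniformConvexity

variable {E : Type*} [NormedAddCommGroup E] [NormedSpace ℝ E] {s : Set E} {φ : ℝ → ℝ}

theorem uniformConvexOn_iSup {ι : Type*} [Nonempty ι] {F : ι → E → ℝ}
    (hF : ∀ i, UniformConvexOn s φ (F i)) (hbdd : ∀ x ∈ s, BddAbove (range fun i ↦ F i x)) :
    UniformConvexOn s φ fun x ↦ ⨆ i, F i x := by
  refine ⟨(hF (Classical.arbitrary ι)).1, fun x hx y hy a b ha hb hab ↦ ciSup_le fun i ↦ ?_⟩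
  refine ((hF i).2 hx hy ha hb hab).trans ?_
  gcongr
  exacts [le_ciSup (hbdd x hx) i, le_ciSup (hbdd y hy) i]

theorem add_modulus_le_of_isMinOn_of_uniformConvexOn {g : E → ℝ} {p x : E}
    (hg : UniformConvexOn s φ g) (hmin : IsMinOn g s p) (hp : p ∈ s) (hx : x ∈ s) :
    g p + φ ‖x - p‖ ≤ g x := by
  have segment_bound : ∀ t ∈ Ioo (0 : ℝ) 1, g p + (1 - t) * φ ‖x - p‖ ≤ g x := by
    intro t ⟨ht0, ht1⟩
    have ht1' : 0 ≤ 1 - t := sub_nonneg.2 ht1.le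
    have hconv := hg.2 hx hp ht0.le ht1' (add_sub_cancel t 1)
    have hmin_t := hmin (hg.1 hx hp ht0.le ht1' (add_sub_cancel t 1))
    simp only [mem_ofPred_eq, smul_eq_mul] at hconv hmin_t
    refine le_of_mul_le_mul_left ?_ ht0
    linarith
  have hlim : Tendsto (fun t : ℝ ↦ g p + (1 - t) * φ ‖x - p‖) (𝓝[>] 0) (𝓝 (g p + φ ‖x - p‖)) := by
    have hcont : Continuous fun t : ℝ ↦ g p + (1 - t) * φ ‖x - p‖ := by fun_prop
    simpa using (hcont.tendsto 0).mono_left nhdsWithin_le_nhds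
  exact le_of_tendsto hlim (eventually_of_mem (Ioo_mem_nhdsGT one_pos) segment_bound)

end UniformConvexity

section FirstOrder

variable {E : Type*} [NormedAddCommGroup E] [InnerProductSpace ℝ E] {s : Set E} {m : ℝ}

theorem strongConvexOn_of_quadratic_minorant {g : E → ℝ} {g' : E → E}
    (hs : Convex ℝ s)
    (h : ∀ z ∈ s, ∀ x ∈ s, g z + ⟪g' z, x - z⟫ + m / 2 * ‖x - z‖ ^ 2 ≤ g x) :
    StrongConvexOn s m g := by
  refine ⟨hs, fun x hx y hy a b ha hb hab ↦ ?_⟩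
  obtain rfl := eq_sub_of_add_eq' hab
  set z := a • x + (1 - a) • y with hz
  have hzs : z ∈ s := hs hx hy ha hb hab
  have hxz : x - z = (1 - a) • (x - y) := by rw [hz]; module
  have hyz : y - z = -a • (x - y) := by rw [hz]; module
  have hx_bound := mul_le_mul_of_nonneg_left (h z hzs x hx) ha
  have hy_bound := mul_le_mul_of_nonneg_left (h z hzs y hy) hb
  rw [hxz, inner_smul_right, norm_smul, mul_pow, Real.norm_eq_abs, sq_abs] at hx_bound
  rw [hyz, inner_smul_right, norm_smul, mul_pow, Real.norm_eq_abs, sq_abs] at hy_bound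
  simp only [smul_eq_mul]
  linarith

theorem strongConvexOn_mul_norm_sub_sq (hs : Convex ℝ s) (c : ℝ) (a : E) :
    StrongConvexOn s (2 * c) fun x ↦ c * ‖x - a‖ ^ 2 := by
  refine strongConvexOn_of_quadratic_minorant (g' := fun z ↦ (2 * c) • (z - a)) hs
    fun z _ x _ ↦ le_of_eq ?_
  rw [← sub_add_sub_cancel' z a x, norm_add_sq_real, real_inner_smul_left]
  ring

theorem add_mul_norm_sub_sq_le_of_isMinOn_prox {F : E → ℝ} {c : ℝ} {a p : E}
    (hF : StrongConvexOn s m F) (hmin : IsMinOn (fun z ↦ F z + c * ‖z - a‖ ^ 2) s p)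
    (hp : p ∈ s) (ha : a ∈ s) :
    F p + (2 * c + m / 2) * ‖a - p‖ ^ 2 ≤ F a := by
  have growth := add_modulus_le_of_isMinOn_of_uniformConvexOn
    (hF.add (strongConvexOn_mul_norm_sub_sq hF.1 c a)) hmin hp ha
  simp only [Pi.add_apply, sub_self, norm_zero, norm_sub_rev p a] at growth
  linarith

variable [CompleteSpace E] {g : E → ℝ}

theorem quadratic_minorant_of_gradient_monotone {z : E} (hg : Differentiable ℝ g)
    (hmono : ∀ x, m * ‖x - z‖ ^ 2 ≤ ⟪∇ g x - ∇ g z, x - z⟫) (x : E) :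
    g z + ⟪∇ g z, x - z⟫ + m / 2 * ‖x - z‖ ^ 2 ≤ g x := by
  set v := x - z with hv
  let φ : ℝ → ℝ := fun t ↦ g (z + t • v) - t * ⟪∇ g z, v⟫ - m / 2 * ‖v‖ ^ 2 * t ^ 2
  have hφ (t : ℝ) : HasDerivAt φ (⟪∇ g (z + t • v) - ∇ g z, v⟫ - m * t * ‖v‖ ^ 2) t := by
    have hline : HasDerivAt (fun t : ℝ ↦ z + t • v) v t := by
      simpa using ((hasDerivAt_id t).smul_const v).const_add z
    have hgline := (hg (z + t • v)).hasFDerivAt.comp_hasDerivAt t hline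
    refine ((hgline.sub ((hasDerivAt_id t).mul_const ⟪∇ g z, v⟫)).sub
      ((hasDerivAt_pow 2 t).const_mul (m / 2 * ‖v‖ ^ 2))).congr_deriv ?_
    rw [inner_sub_left, inner_gradient_left, inner_gradient_left]
    ring
  have hφ_nonneg : ∀ t ∈ interior (Ici (0 : ℝ)), 0 ≤ deriv φ t := by
    intro t ht
    have ht : 0 < t := by simpa using ht
    have hmono_t := hmono (z + t • v)
    rw [add_sub_cancel_left, inner_smul_right, norm_smul, Real.norm_of_nonneg ht.le] at hmono_t
    rw [(hφ t).deriv, sub_nonneg]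
    refine le_of_mul_le_mul_left ?_ ht
    linarith
  have hφ_mono : MonotoneOn φ (Ici 0) :=
    monotoneOn_of_deriv_nonneg (convex_Ici 0) (fun t _ ↦ (hφ t).continuousAt.continuousWithinAt)
      (fun t _ ↦ (hφ t).differentiableAt.differentiableWithinAt) hφ_nonneg
  have hφ_le : φ 0 ≤ φ 1 := hφ_mono self_mem_Ici (mem_Ici.2 zero_le_one) zero_le_one
  simp only [φ, hv, zero_smul, add_zero, one_smul, add_sub_cancel] at hφ_le
  linarith

theorem quadratic_minorant_of_lipschitzWith_gradient {K : ℝ≥0} (hg : Differentiable ℝ g)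
    (hK : LipschitzWith K (∇ g)) (z x : E) :
    g z + ⟪∇ g z, x - z⟫ + -K / 2 * ‖x - z‖ ^ 2 ≤ g x := by
  refine quadratic_minorant_of_gradient_monotone hg (fun w ↦ ?_) x
  calc -K * ‖w - z‖ ^ 2 = -(K * ‖w - z‖ * ‖w - z‖) := by ring
    _ ≤ -(‖∇ g w - ∇ g z‖ * ‖w - z‖) := by gcongr; exact hK.norm_sub_le w z
    _ ≤ ⟪∇ g w - ∇ g z, w - z⟫ := neg_le_of_abs_le (abs_real_inner_le_norm _ _)

theorem strongConvexOn_neg_of_lipschitzWith_gradient {K : ℝ≥0} (hg : Differentiable ℝ g)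
    (hK : LipschitzWith K (∇ g)) : StrongConvexOn univ (-K) g :=
  strongConvexOn_of_quadratic_minorant convex_univ fun z _ x _ ↦
    quadratic_minorant_of_lipschitzWith_gradient hg hK z x

theorem mul_norm_sub_prox_sq_le {ι : Type*} {F : ι → E → ℝ} {K : ℝ≥0} {a p : E}
    (hF : ∀ i, Differentiable ℝ (F i)) (hK : ∀ i, LipschitzWith K (∇ (F i)))
    (hbdd : ∀ x, BddAbove (range fun i ↦ F i x))
    (hp : IsMinOn (fun z ↦ (⨆ i, F i z) + K * ‖z - a‖ ^ 2) univ p) (i : ι) :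
    K * ‖a - p‖ ^ 2 ≤ (⨆ j, F j a) - F i a + ‖∇ (F i) a‖ * ‖a - p‖ := by
  have : Nonempty ι := ⟨i⟩
  have sup_weakly_convex : StrongConvexOn univ (-K) fun x ↦ ⨆ j, F j x :=
    uniformConvexOn_iSup (fun j ↦ strongConvexOn_neg_of_lipschitzWith_gradient (hF j) (hK j))
      fun x _ ↦ hbdd x
  have prox_gap :=
    add_mul_norm_sub_sq_le_of_isMinOn_prox sup_weakly_convex hp (mem_univ p) (mem_univ a)
  have descent := quadratic_minorant_of_lipschitzWith_gradient (hF i) (hK i) a p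
  have cauchy_schwarz := neg_le_of_abs_le (abs_real_inner_le_norm (∇ (F i) a) (p - a))
  have le_sup : F i p ≤ ⨆ j, F j p := le_ciSup (hbdd p) i
  rw [norm_sub_rev p a] at descent cauchy_schwarz
  linarith

end FirstOrder

theorem moreau_envelope_bound_general {X Y : Type*}
    [NormedAddCommGroup X] [InnerProductSpace ℝ X] [CompleteSpace X]
    [NormedAddCommGroup Y] [InnerProductSpace ℝ Y] [CompleteSpace Y]
    {f : X → Y → ℝ} {l : ℝ≥0} {μ : ℝ} (hμ : 0 < μ)
    (hdiff : Differentiable ℝ fun p : X × Y ↦ f p.1 p.2)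
    (hlip : ∀ y, LipschitzWith l (∇ fun x ↦ f x y))
    (hbdd : ∀ x, BddAbove (range (f x))) {xt xp : X} {yt : Y}
    (hPL : 2 * μ * ((⨆ y, f xt y) - f xt yt) ≤ ‖∇ (f xt) yt‖ ^ 2)
    (hxp : IsMinOn (fun z ↦ (⨆ y, f z y) + l * ‖z - xt‖ ^ 2) univ xp) :
    4 * (l : ℝ) ^ 2 * ‖xt - xp‖ ^ 2 ≤
      4 * (l / μ) * ‖∇ (f xt) yt‖ ^ 2 + 4 * ‖∇ (fun x ↦ f x yt) xt‖ ^ 2 := by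
  set r := ‖xt - xp‖
  set G := ‖∇ (f xt) yt‖
  set g := ‖∇ (fun x ↦ f x yt) xt‖
  have hdiffx (y : Y) : Differentiable ℝ fun x ↦ f x y :=
    hdiff.comp (differentiable_id.prodMk (differentiable_const y))
  have prox_bound : l * r ^ 2 ≤ (⨆ y, f xt y) - f xt yt + g * r :=
    mul_norm_sub_prox_sq_le hdiffx hlip hbdd hxp yt
  have gap_bound : (⨆ y, f xt y) - f xt yt ≤ G ^ 2 / (2 * μ) := by
    rwa [le_div_iff₀' (by positivity)]
  have young : 2 * (g * (l * r)) ≤ g ^ 2 + (l * r) ^ 2 := by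
    linarith [two_mul_le_add_sq g (l * r)]
  calc 4 * (l : ℝ) ^ 2 * r ^ 2 = 8 * l * (l * r ^ 2) - 4 * (l * r) ^ 2 := by ring
    _ ≤ 8 * l * (G ^ 2 / (2 * μ) + g * r) - 4 * (l * r) ^ 2 := by gcongr; linarith
    _ = 4 * (l / μ) * G ^ 2 + 4 * (2 * (g * (l * r)) - (l * r) ^ 2) := by field_simp; ring
    _ ≤ 4 * (l / μ) * G ^ 2 + 4 * g ^ 2 := by gcongr; linarith

/-- **Proposition 2.2(b) (Moreau-envelope bound by joint gradients).** For the minimizer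
`xp = prox_{Φ/2l}(x̃)` of `z ↦ Φ(z) + l‖z − x̃‖²`, one has
`4l²‖x̃ − xp‖² ≤ 4κ‖∇_y f(x̃,ỹ)‖² + 4‖∇_x f(x̃,ỹ)‖²`. -/
theorem moreau_envelope_bound
    {d1 d2 : ℕ}
    (f : EuclideanSpace ℝ (Fin d1) → EuclideanSpace ℝ (Fin d2) → ℝ)
    (l μ : ℝ) (hl : 0 < l) (hμ : 0 < μ)
    (hdiff : Differentiable ℝ
      (fun p : EuclideanSpace ℝ (Fin d1) × EuclideanSpace ℝ (Fin d2) => f p.1 p.2))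
    (hlipx : ∀ x₁ x₂ y₁ y₂,
      ‖gradx f x₁ y₁ - gradx f x₂ y₂‖ ≤ l * (‖x₁ - x₂‖ + ‖y₁ - y₂‖))
    (hlipy : ∀ x₁ x₂ y₁ y₂,
      ‖grady f x₁ y₁ - grady f x₂ y₂‖ ≤ l * (‖x₁ - x₂‖ + ‖y₁ - y₂‖))
    (hattain : ∀ x, ∃ ys, ∀ y, f x y ≤ f x ys)
    (hPL : ∀ x y, 2 * μ * (primal f x - f x y) ≤ ‖grady f x y‖ ^ 2)
    (κ : ℝ) (hκ : κ = l / μ)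
    (xt : EuclideanSpace ℝ (Fin d1)) (yt : EuclideanSpace ℝ (Fin d2))
    (xp : EuclideanSpace ℝ (Fin d1))
    (hxp : ∀ z, primal f xp + l * ‖xp - xt‖ ^ 2 ≤ primal f z + l * ‖z - xt‖ ^ 2) :
    4 * l ^ 2 * ‖xt - xp‖ ^ 2 ≤
      4 * κ * ‖grady f xt yt‖ ^ 2 + 4 * ‖gradx f xt yt‖ ^ 2 := by
  subst hκ
  lift l to ℝ≥0 using hl.le
  exact moreau_envelope_bound_general hμ hdiff
    (fun y ↦ .of_dist_le_mul fun a b ↦ by simpa [gradx, dist_eq_norm] using hlipx a b y y)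
    (fun x ↦ (hattain x).elim fun ys h ↦ ⟨f x ys, forall_mem_range.2 h⟩) (hPL xt yt) fun z _ ↦ hxp z
end

section
/- (Lemma A.2, PL implies error bound and quadratic growth) Let h : ℝ^d → ℝ be differentiable with l-Lipschitz gradient, suppose its infimum h* is finite and the set S := Argmin h is nonempty, and suppose h satisfies the PL condition with constant μ > 0: ‖∇h(x)‖² ≥ 2μ(h(x) − h*) for all x. Then for every x: (error bound) ‖∇h(x)‖ ≥ μ·dist(x, S), and (quadratic growth) h(x) − h* ≥ (μ/2)·dist(x, S)², where dist(x, S) = inf_{z ∈ S} ‖x − z‖. -/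
open MeasureTheory Real

/-!
Off the minimizers of `h` the function `f = √(h - h*)` has derivative `Dh / (2 f)`, whose norm is at
least `√(μ / 2)` by the PL inequality. So for `c < √(μ / 2)` every non-minimizer `y` admits some
`z ≠ y` with `f z + c * dist z y ≤ f y`, and the Ekeland variational principle, which allows
descending from `x` until no such step is left, produces a minimizer `z` with `c * dist z x ≤ f x`.
Letting `c → √(μ / 2)` gives quadratic growth, and combining this with PL gives the error bound.
-/

open Filter Set Topology

theorem le_of_tendsto_of_lowerSemicontinuousAt {X β ι : Type*} [TopologicalSpace X]
    [TopologicalSpace β] [LinearOrder β] [DenselyOrdered β] [OrderClosedTopology β] {f : X → β}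
    {y : X} {a : β} {l : Filter ι} [l.NeBot] {u : ι → X} (hf : LowerSemicontinuousAt f y)
    (hu : Tendsto u l (𝓝 y)) (hfu : Tendsto (f ∘ u) l (𝓝 a)) : f y ≤ a :=
  le_of_forall_lt_imp_le_of_dense fun b hb ↦
    ge_of_tendsto hfu ((hu.eventually (hf b hb)).mono fun _ ↦ le_of_lt)

theorem eq_ciInf_iff_forall_le {α β : Type*} [ConditionallyCompleteLattice β] {h : α → β}
    (hbdd : BddBelow (range h)) {z : α} : h z = ⨅ y, h y ↔ ∀ w, h z ≤ h w := by
  have : Nonempty α := ⟨z⟩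
  exact ⟨fun hz w ↦ hz.trans_le (ciInf_le hbdd w),
    fun hz ↦ (le_ciInf hz).antisymm (ciInf_le hbdd z)⟩

section Ekeland

/-- The Ekeland (or Bishop–Phelps) order of a function `f` with rate `c`: a point `z` lies below `y`
if moving from `y` to `z` decreases `f` by at least `c` times the distance travelled, so that the
minimal points are those from which no descent at rate `c` is possible. -/
def EkelandLE {X : Type*} [PseudoMetricSpace X] (f : X → ℝ) (c : ℝ) (z y : X) : Prop :=
  f z + c * dist z y ≤ f y

variable {X : Type*} {f : X → ℝ} {c : ℝ}

section PseudoMetricSpace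

variable [PseudoMetricSpace X] {x y z : X} {C : Set X}

theorem EkelandLE.trans (hc : 0 ≤ c) (hzy : EkelandLE f c z y) (hyx : EkelandLE f c y x) :
    EkelandLE f c z x := by
  have htri := mul_le_mul_of_nonneg_left (dist_triangle z y x) hc
  unfold EkelandLE at *
  linarith

theorem mul_dist_le_abs_sub_of_isChain (hC : IsChain (EkelandLE f c) C) (hy : y ∈ C) (hz : z ∈ C) :
    c * dist y z ≤ |f y - f z| := by
  rcases eq_or_ne y z with rfl | hne
  · simp
  rcases hC hy hz hne with hyz | hzy
  · rw [abs_sub_comm]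
    exact (le_sub_iff_add_le'.2 hyz).trans (le_abs_self _)
  · rw [dist_comm]
    exact (le_sub_iff_add_le'.2 hzy).trans (le_abs_self _)

theorem exists_forall_ekelandLE_of_isChain [CompleteSpace X] (hf : LowerSemicontinuous f)
    (hbdd : BddBelow (range f)) (hc : 0 < c) (hC : IsChain (EkelandLE f c) C) (hne : C.Nonempty) :
    ∃ y, ∀ z ∈ C, EkelandLE f c y z := by
  have hbddC : BddBelow (f '' C) := hbdd.mono (image_subset_range f C)
  set a := sInf (f '' C)
  have ha : ∀ z ∈ C, a ≤ f z := fun z hz ↦ csInf_le hbddC (mem_image_of_mem f hz)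
  obtain ⟨v, hv_anti, hva : Tendsto v atTop (𝓝 a), hvC⟩ :=
    exists_seq_tendsto_sInf (hne.image f) hbddC
  choose u huC hfu using hvC
  obtain rfl : f ∘ u = v := funext hfu
  have hu_cauchy : CauchySeq u := by
    refine cauchySeq_of_le_tendsto_0' (fun n ↦ (f (u n) - a) / c) (fun n m hnm ↦ ?_) ?_
    · rw [le_div_iff₀' hc]
      calc c * dist (u n) (u m) ≤ |f (u n) - f (u m)| :=
            mul_dist_le_abs_sub_of_isChain hC (huC n) (huC m)
        _ = f (u n) - f (u m) := abs_of_nonneg (sub_nonneg.2 (hv_anti hnm))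
        _ ≤ f (u n) - a := sub_le_sub_left (ha _ (huC m)) _
    · simpa only [sub_self, zero_div, Function.comp_apply] using (hva.sub_const a).div_const c
  obtain ⟨y, hy⟩ := cauchySeq_tendsto_of_complete hu_cauchy
  refine ⟨y, fun z hz ↦ ?_⟩
  have hfy : f y ≤ a := le_of_tendsto_of_lowerSemicontinuousAt (hf y) hy hva
  have hdist : c * dist y z ≤ |a - f z| :=
    le_of_tendsto_of_tendsto' ((hy.dist tendsto_const_nhds).const_mul c) (hva.sub_const (f z)).abs
      fun n ↦ mul_dist_le_abs_sub_of_isChain hC (huC n) hz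
  rw [abs_of_nonpos (sub_nonpos.2 (ha z hz))] at hdist
  unfold EkelandLE
  linarith

end PseudoMetricSpace

variable [MetricSpace X]

theorem EkelandLE.antisymm {y z : X} (hc : 0 < c) (hzy : EkelandLE f c z y)
    (hyz : EkelandLE f c y z) : z = y := by
  unfold EkelandLE at hzy hyz
  rw [dist_comm y z] at hyz
  exact dist_le_zero.1 (nonpos_of_mul_nonpos_right (by linarith) hc)

variable [CompleteSpace X]

theorem ekeland_variational_principle_s12 (hf : LowerSemicontinuous f) (hbdd : BddBelow (range f))
    (hc : 0 < c) (x : X) : ∃ y, EkelandLE f c y x ∧ ∀ z, EkelandLE f c z y → z = y := by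
  obtain ⟨M, hM, hxM⟩ := (IsChain.singleton (r := EkelandLE f c) (a := x)).exists_maxChain
  rw [singleton_subset_iff] at hxM
  obtain ⟨y, hy⟩ := exists_forall_ekelandLE_of_isChain hf hbdd hc hM.1 ⟨x, hxM⟩
  refine ⟨y, hy x hxM, fun z hzy ↦ ?_⟩
  have hinsert : IsChain (EkelandLE f c) (insert z M) :=
    hM.1.insert fun w hw _ ↦ .inl (hzy.trans hc.le (hy w hw))
  have hzM : z ∈ M := hM.2 hinsert (subset_insert z M) ▸ mem_insert z M
  exact hzy.antisymm hc (hy z hzM)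

theorem exists_mem_ekelandLE_of_forall_notMem (hf : LowerSemicontinuous f)
    (hbdd : BddBelow (range f)) (hc : 0 < c) {S : Set X}
    (hS : ∀ y ∉ S, ∃ z ≠ y, EkelandLE f c z y) (x : X) : ∃ y ∈ S, EkelandLE f c y x := by
  obtain ⟨y, hyx, hmin⟩ := ekeland_variational_principle_s12 hf hbdd hc x
  refine ⟨y, ?_, hyx⟩
  by_contra hy
  obtain ⟨z, hne, hzy⟩ := hS y hy
  exact hne (hmin z hzy)

end Ekeland

section NormedSpace

variable {E : Type*} [NormedAddCommGroup E] [NormedSpace ℝ E]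

theorem exists_apply_lt_neg_of_lt_norm {φ : E →L[ℝ] ℝ} {c : ℝ} (h : c < ‖φ‖) :
    ∃ v, ‖v‖ < 1 ∧ φ v < -c := by
  obtain ⟨v, hv, hcv⟩ := φ.exists_lt_apply_of_lt_opNorm h
  rcases lt_abs.1 hcv with hpos | hneg
  · exact ⟨-v, by rwa [norm_neg], by rw [map_neg]; exact neg_lt_neg hpos⟩
  · exact ⟨v, hv, lt_neg_of_lt_neg hneg⟩

theorem exists_ne_ekelandLE_of_lt_norm {f : E → ℝ} {f' : E →L[ℝ] ℝ} {y : E} {c : ℝ}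
    (hf : HasFDerivAt f f' y) (hc : 0 ≤ c) (hcf : c < ‖f'‖) :
    ∃ z ≠ y, EkelandLE f c z y := by
  obtain ⟨v, hv, hfv⟩ := exists_apply_lt_neg_of_lt_norm hcf
  have hv0 : v ≠ 0 := by
    rintro rfl
    rw [map_zero] at hfv
    linarith
  have hslope := (hf.hasLineDerivAt v).tendsto_slope_zero_right
  obtain ⟨t, htv, ht⟩ := ((hslope.eventually_lt_const hfv).and self_mem_nhdsWithin).exists
  replace ht : 0 < t := ht
  refine ⟨y + t • v, by simp [ht.ne', hv0], ?_⟩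
  have hdecrease : f (y + t • v) - f y < -(c * t) := by
    simpa [inv_mul_lt_iff₀ ht, mul_comm t] using htv
  have hdist : dist (y + t • v) y ≤ t := by
    rw [dist_self_add_left, norm_smul, Real.norm_of_nonneg ht.le]
    exact mul_le_of_le_one_right ht.le hv.le
  have hcost := mul_le_mul_of_nonneg_left hdist hc
  unfold EkelandLE
  linarith

theorem sqrt_half_le_norm_smul {v : E} {μ r : ℝ} (hr : 0 < r) (h : 2 * μ * r ≤ ‖v‖ ^ 2) :
    √(μ / 2) ≤ ‖(1 / (2 * √r)) • v‖ := by
  rw [norm_smul, Real.norm_of_nonneg (by positivity)]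
  refine Real.sqrt_le_iff.2 ⟨by positivity, ?_⟩
  rw [mul_pow, div_pow, mul_pow, Real.sq_sqrt hr.le, one_pow, one_div_mul_eq_div,
    le_div_iff₀ (by positivity)]
  linarith

/-- The Polyak–Łojasiewicz condition with constant `μ`. The norm of the gradient is expressed as the
dual norm of `fderiv ℝ h x`, so that no inner product is needed. If `h` is not bounded below, the
infimum takes its default value `0`. -/
def PLCondition (μ : ℝ) (h : E → ℝ) : Prop :=
  ∀ x, 2 * μ * (h x - ⨅ y, h y) ≤ ‖fderiv ℝ h x‖ ^ 2

namespace PLCondition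

variable [CompleteSpace E] {h : E → ℝ} {μ : ℝ}

theorem exists_forall_le_and_mul_dist_le_sqrt (hPL : PLCondition μ h) (hdiff : Differentiable ℝ h)
    (hbdd : BddBelow (range h)) {c : ℝ} (hc : 0 < c) (hcμ : c < √(μ / 2)) (x : E) :
    ∃ z, (∀ w, h z ≤ h w) ∧ c * dist z x ≤ √(h x - ⨅ y, h y) := by
  set f : E → ℝ := fun x ↦ √(h x - ⨅ y, h y)
  have hdescent : ∀ y ∉ {z | ∀ w, h z ≤ h w}, ∃ z ≠ y, EkelandLE f c z y := by
    intro y hy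
    have hgap : 0 < h y - ⨅ y, h y :=
      sub_pos.2 ((ciInf_le hbdd y).lt_of_ne' (mt (eq_ciInf_iff_forall_le hbdd).1 hy))
    exact exists_ne_ekelandLE_of_lt_norm
      (((hdiff y).hasFDerivAt.sub_const _).sqrt hgap.ne') hc.le
      (hcμ.trans_le (sqrt_half_le_norm_smul hgap (hPL y)))
  have hf : Continuous f := (hdiff.continuous.sub continuous_const).sqrt
  have hf_bdd : BddBelow (range f) := ⟨0, forall_mem_range.2 fun _ ↦ Real.sqrt_nonneg _⟩
  obtain ⟨z, hz, hzx⟩ :=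
    exists_mem_ekelandLE_of_forall_notMem hf.lowerSemicontinuous hf_bdd hc hdescent x
  exact ⟨z, hz, (le_add_of_nonneg_left (Real.sqrt_nonneg _)).trans hzx⟩

theorem exists_forall_le (hPL : PLCondition μ h) (hμ : 0 < μ) (hdiff : Differentiable ℝ h)
    (hbdd : BddBelow (range h)) : ∃ z, ∀ w, h z ≤ h w := by
  obtain ⟨c, hc, hcμ⟩ := exists_between (Real.sqrt_pos.2 (half_pos hμ))
  exact (hPL.exists_forall_le_and_mul_dist_le_sqrt hdiff hbdd hc hcμ 0).imp fun _ ↦ And.left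

theorem sqrt_half_mul_infDist_le_sqrt (hPL : PLCondition μ h) (hdiff : Differentiable ℝ h)
    (hbdd : BddBelow (range h)) (x : E) :
    √(μ / 2) * Metric.infDist x {z | ∀ w, h z ≤ h w} ≤ √(h x - ⨅ y, h y) := by
  refine mul_le_of_forall_lt_of_nonneg (Real.sqrt_nonneg _) (Real.sqrt_nonneg _)
    fun c hc hcμ b _ hb ↦ ?_
  rcases hc.eq_or_lt' with rfl | hc
  · rw [zero_mul]
    exact Real.sqrt_nonneg _
  obtain ⟨z, hz, hzx⟩ := hPL.exists_forall_le_and_mul_dist_le_sqrt hdiff hbdd hc hcμ x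
  calc c * b ≤ c * dist x z := by gcongr; exact hb.le.trans (Metric.infDist_le_dist_of_mem hz)
    _ = c * dist z x := by rw [dist_comm]
    _ ≤ √(h x - ⨅ y, h y) := hzx

theorem quadratic_growth (hPL : PLCondition μ h) (hμ : 0 ≤ μ) (hdiff : Differentiable ℝ h)
    (hbdd : BddBelow (range h)) (x : E) :
    μ / 2 * Metric.infDist x {z | ∀ w, h z ≤ h w} ^ 2 ≤ h x - ⨅ y, h y := by
  set D := Metric.infDist x {z | ∀ w, h z ≤ h w}
  have hD : 0 ≤ D := Metric.infDist_nonneg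
  calc μ / 2 * D ^ 2 = (√(μ / 2) * D) ^ 2 := by rw [mul_pow, Real.sq_sqrt (by positivity)]
    _ ≤ √(h x - ⨅ y, h y) ^ 2 := by gcongr; exact hPL.sqrt_half_mul_infDist_le_sqrt hdiff hbdd x
    _ = h x - ⨅ y, h y := Real.sq_sqrt (sub_nonneg.2 (ciInf_le hbdd x))

theorem error_bound (hPL : PLCondition μ h) (hμ : 0 ≤ μ) (hdiff : Differentiable ℝ h)
    (hbdd : BddBelow (range h)) (x : E) :
    μ * Metric.infDist x {z | ∀ w, h z ≤ h w} ≤ ‖fderiv ℝ h x‖ := by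
  set D := Metric.infDist x {z | ∀ w, h z ≤ h w}
  refine le_of_abs_le (abs_le_of_sq_le_sq ?_ (norm_nonneg _))
  calc (μ * D) ^ 2 = 2 * μ * (μ / 2 * D ^ 2) := by ring
    _ ≤ 2 * μ * (h x - ⨅ y, h y) := by gcongr; exact hPL.quadratic_growth hμ hdiff hbdd x
    _ ≤ ‖fderiv ℝ h x‖ ^ 2 := hPL x

end PLCondition

end NormedSpace

theorem norm_gradient_eq_norm_fderiv {𝕜 F : Type*} [RCLike 𝕜] [NormedAddCommGroup F]
    [InnerProductSpace 𝕜 F] [CompleteSpace F] (h : F → 𝕜) (x : F) :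
    ‖gradient h x‖ = ‖fderiv 𝕜 h x‖ :=
  (InnerProductSpace.toDual 𝕜 F).symm.norm_map _

theorem pl_implies_eb_and_qg_general {E : Type*} [NormedAddCommGroup E] [NormedSpace ℝ E]
    [CompleteSpace E] {h : E → ℝ} {μ : ℝ} (hμ : 0 < μ) (hdiff : Differentiable ℝ h)
    (hbdd : BddBelow (range h)) (hPL : PLCondition μ h) :
    {z | ∀ w, h z ≤ h w}.Nonempty ∧
      ∀ x, μ * Metric.infDist x {z | ∀ w, h z ≤ h w} ≤ ‖fderiv ℝ h x‖ ∧
        (μ / 2) * Metric.infDist x {z | ∀ w, h z ≤ h w} ^ 2 ≤ h x - ⨅ y, h y :=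
  ⟨hPL.exists_forall_le hμ hdiff hbdd, fun x ↦
    ⟨hPL.error_bound hμ.le hdiff hbdd x, hPL.quadratic_growth hμ.le hdiff hbdd x⟩⟩

/-- **Lemma A.2 (PL implies error bound and quadratic growth).** If `h` is differentiable with
`l`-Lipschitz gradient, attains its finite infimum on the nonempty set `S = Argmin h`, and
satisfies the `μ`-PL condition, then `‖∇h(x)‖ ≥ μ·dist(x,S)` and
`h(x) − h* ≥ (μ/2)·dist(x,S)²` for all `x`. -/
theorem pl_implies_eb_and_qg
    {d : ℕ} (h : EuclideanSpace ℝ (Fin d) → ℝ)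
    (l μ : ℝ) (hl : 0 < l) (hμ : 0 < μ)
    (hdiff : Differentiable ℝ h)
    (hlip : ∀ x y, ‖gradient h x - gradient h y‖ ≤ l * ‖x - y‖)
    (S : Set (EuclideanSpace ℝ (Fin d)))
    (hS : S = {z | ∀ w, h z ≤ h w})
    (hSne : S.Nonempty)
    (hstar : ℝ) (hhstar : hstar = ⨅ x, h x)
    (hPL : ∀ x, 2 * μ * (h x - hstar) ≤ ‖gradient h x‖ ^ 2) :
    ∀ x, μ * Metric.infDist x S ≤ ‖gradient h x‖ ∧
      (μ / 2) * Metric.infDist x S ^ 2 ≤ h x - hstar := by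
  subst hS hhstar
  obtain ⟨z, hz⟩ := hSne
  simp only [norm_gradient_eq_norm_fderiv] at hPL ⊢
  exact (pl_implies_eb_and_qg_general hμ hdiff ⟨h z, forall_mem_range.2 hz⟩ hPL).2
end

section
/- (Lemma C.2, error bound for the dual ascent step on the regularized problem) Let p > l, τ₂ > 0, and define f̂(x, y; z) := f(x, y) + (p/2)·‖x − z‖², x*(y, z) := argmin_x f̂(x, y; z), x*(z) := argmin_x max_y f̂(x, y; z), and y⁺(z) := y + τ₂·∇_y f̂(x*(y, z), y; z). Then for every (y, z): ‖x*(z) − x*(y⁺(z), z)‖² ≤ (1/((p − l)·μ)) · (1 + τ₂·l + τ₂·l·(p + l)/(p − l))² · ‖∇_y f̂(x*(y, z), y; z)‖². -/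
open MeasureTheory Real

/-!
The point `x*(y, z)` is a proximal point at `z` of `f(·, y)`, and `x*(z)` is one of
`Φ = max_y f(·, y) ≥ f(·, y)`. As `f(·, y)` has an `l`-Lipschitz gradient, its regularization grows
quadratically, with modulus `p - l`, around its minimizer. Comparing the regularizations of
`f(·, y)` and of `Φ` at both minimizers therefore bounds `(p - l)/2 * ‖x*(z) - x*(y, z)‖²` by the
gap `Φ - f(·, y)` at `x*(y, z)`, and the Polyak–Łojasiewicz inequality bounds this gap by
`‖∇_y f(x*(y, z), y)‖² / (2μ)`. Applied at `y⁺(z)`, this leaves the gradient at the new pair to be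
compared with the one at the old pair; since `y ↦ x*(y, z)` is `l / (p - l)`-Lipschitz, it has grown
by at most the stated factor, even with `l / (p - l)` in place of `(p + l) / (p - l)`.
-/

open AffineMap Gradient

section LowerBound

variable {E : Type*} [NormedAddCommGroup E] [NormedSpace ℝ E] {φ : E → ℝ} {l : ℝ} {a : E}

theorem neg_mul_sq_le_fderiv_lineMap_sub
    (hlip : ∀ x, ‖fderiv ℝ φ x - fderiv ℝ φ a‖ ≤ l * ‖x - a‖) (x : E) {t : ℝ} (ht : 0 ≤ t) :
    -(l * t * ‖x - a‖ ^ 2) ≤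
      fderiv ℝ φ (lineMap a x t) (x - a) - fderiv ℝ φ a (x - a) := by
  have hbound : |fderiv ℝ φ (lineMap a x t) (x - a) - fderiv ℝ φ a (x - a)| ≤
      l * t * ‖x - a‖ ^ 2 :=
    calc
      _ ≤ ‖fderiv ℝ φ (lineMap a x t) - fderiv ℝ φ a‖ * ‖x - a‖ :=
        (fderiv ℝ φ (lineMap a x t) - fderiv ℝ φ a).le_opNorm (x - a)
      _ ≤ l * ‖lineMap a x t - a‖ * ‖x - a‖ := by gcongr; exact hlip _
      _ = l * t * ‖x - a‖ ^ 2 := by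
        rw [lineMap_apply_module', add_sub_cancel_right, norm_smul, Real.norm_of_nonneg ht]
        ring
  exact neg_le_of_abs_le hbound

theorem add_fderiv_sub_mul_sq_le (hφ : Differentiable ℝ φ)
    (hlip : ∀ x, ‖fderiv ℝ φ x - fderiv ℝ φ a‖ ≤ l * ‖x - a‖) (x : E) :
    φ a + fderiv ℝ φ a (x - a) - l / 2 * ‖x - a‖ ^ 2 ≤ φ x := by
  let h : ℝ → ℝ := fun t =>
    φ (lineMap a x t) - t * fderiv ℝ φ a (x - a) + t ^ 2 * (l / 2 * ‖x - a‖ ^ 2)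
  have hderiv (t : ℝ) : HasDerivAt h (fderiv ℝ φ (lineMap a x t) (x - a) -
      1 * fderiv ℝ φ a (x - a) + 2 * t * (l / 2 * ‖x - a‖ ^ 2)) t := by
    have hline := (hφ (lineMap a x t)).hasFDerivAt.comp_hasDerivAt t hasDerivAt_lineMap
    have hsq : HasDerivAt (fun t : ℝ => t ^ 2) (2 * t) t := by simpa using hasDerivAt_pow 2 t
    exact (hline.sub ((hasDerivAt_id t).mul_const _)).add (hsq.mul_const _)
  have hmono : MonotoneOn h (Set.Ici 0) := by
    refine monotoneOn_of_deriv_nonneg (convex_Ici 0)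
      (fun t _ => (hderiv t).continuousAt.continuousWithinAt)
      (fun t _ => (hderiv t).differentiableAt.differentiableWithinAt) fun t ht => ?_
    rw [(hderiv t).deriv]
    linarith [neg_mul_sq_le_fderiv_lineMap_sub hlip x (interior_subset ht : 0 ≤ t)]
  have h01 : h 0 ≤ h 1 := hmono Set.self_mem_Ici (Set.mem_Ici.2 zero_le_one) zero_le_one
  simp only [h, lineMap_apply_zero, lineMap_apply_one] at h01
  linarith

end LowerBound

theorem norm_fderiv_sub_fderiv (𝕜 : Type*) {E : Type*} [RCLike 𝕜] [NormedAddCommGroup E]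
    [InnerProductSpace 𝕜 E] [CompleteSpace E] (φ ψ : E → 𝕜) (a b : E) :
    ‖fderiv 𝕜 φ a - fderiv 𝕜 ψ b‖ = ‖∇ φ a - ∇ ψ b‖ := by
  rw [← toDual_gradient, ← toDual_gradient, ← map_sub, LinearIsometryEquiv.norm_map]

/-- `a` is a proximal point of `φ` at `z`: it minimizes the regularization
`x ↦ φ x + (p / 2) * ‖x - z‖ ^ 2`. This is a relation, not an operator, so that neither existence
nor uniqueness of the minimizer is presupposed. -/
def IsProxPoint {E : Type*} [NormedAddCommGroup E] (φ : E → ℝ) (p : ℝ) (z a : E) : Prop :=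
  ∀ x, φ a + p / 2 * ‖a - z‖ ^ 2 ≤ φ x + p / 2 * ‖x - z‖ ^ 2

theorem isProxPoint_iSup_iff {E ι : Type*} [NormedAddCommGroup E] [Nonempty ι] {f : E → ι → ℝ}
    (hbdd : ∀ x, BddAbove (Set.range (f x))) {p : ℝ} {z a : E} :
    IsProxPoint (fun x => ⨆ i, f x i) p z a ↔
      ∀ x, (⨆ i, f a i + p / 2 * ‖a - z‖ ^ 2) ≤ ⨆ i, f x i + p / 2 * ‖x - z‖ ^ 2 := by
  simp only [IsProxPoint, ciSup_add (hbdd _)]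

namespace IsProxPoint

variable {E : Type*} [NormedAddCommGroup E] [InnerProductSpace ℝ E] [CompleteSpace E]
  {φ ψ : E → ℝ} {l p : ℝ} {z a b : E}

theorem gradient_eq (ha : IsProxPoint φ p z a) (hφ : DifferentiableAt ℝ φ a) :
    ∇ φ a = p • (z - a) := by
  have hreg : HasGradientAt (fun x => φ x + p / 2 * ‖x - z‖ ^ 2) (∇ φ a + p • (a - z)) a := by
    rw [hasGradientAt_iff_hasFDerivAt]
    convert! hφ.hasGradientAt.hasFDerivAt.add
      (((hasFDerivAt_id a).sub_const z).norm_sq.const_mul (p / 2)) using 1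
    ext v
    simp only [map_add, toDual_gradient, map_smul, map_sub, add_apply, smul_apply, sub_apply,
      InnerProductSpace.toDual_apply_apply, smul_eq_mul, id_eq, ContinuousLinearMap.comp_id,
      coe_innerSL_apply, nsmul_eq_mul, Nat.cast_ofNat, add_right_inj]
    ring
  have hmin : IsLocalMin (fun x => φ x + p / 2 * ‖x - z‖ ^ 2) a := .of_forall ha
  have hcrit : ∇ φ a + p • (a - z) = 0 :=
    (InnerProductSpace.toDual ℝ E).map_eq_zero_iff.1 (hmin.hasFDerivAt_eq_zero hreg.hasFDerivAt)
  rw [eq_neg_of_add_eq_zero_left hcrit, ← smul_neg, neg_sub]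

theorem quadratic_growth (ha : IsProxPoint φ p z a) (hφ : Differentiable ℝ φ)
    (hlip : ∀ x, ‖∇ φ x - ∇ φ a‖ ≤ l * ‖x - a‖) (x : E) :
    φ a + p / 2 * ‖a - z‖ ^ 2 + (p - l) / 2 * ‖x - a‖ ^ 2 ≤ φ x + p / 2 * ‖x - z‖ ^ 2 := by
  have hlower : φ a + p * inner ℝ (z - a) (x - a) - l / 2 * ‖x - a‖ ^ 2 ≤ φ x := by
    have := add_fderiv_sub_mul_sq_le hφ
      (fun x => (norm_fderiv_sub_fderiv ℝ φ φ x a).trans_le (hlip x)) x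
    rwa [← inner_gradient_left, ha.gradient_eq (hφ a), real_inner_smul_left] at this
  have hexpand : ‖x - z‖ ^ 2 = ‖x - a‖ ^ 2 - 2 * inner ℝ (z - a) (x - a) + ‖a - z‖ ^ 2 := by
    rw [← sub_sub_sub_cancel_right x z a, norm_sub_sq_real, real_inner_comm, norm_sub_rev z a]
  rw [hexpand]
  linarith

theorem sq_norm_sub_le_gap (ha : IsProxPoint φ p z a) (hb : IsProxPoint ψ p z b)
    (hφ : Differentiable ℝ φ) (hlip : ∀ x, ‖∇ φ x - ∇ φ a‖ ≤ l * ‖x - a‖) (hφψ : φ b ≤ ψ b) :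
    (p - l) / 2 * ‖b - a‖ ^ 2 ≤ ψ a - φ a := by
  linarith [ha.quadratic_growth hφ hlip b, hb a]

theorem norm_sub_le (ha : IsProxPoint φ p z a) (hb : IsProxPoint ψ p z b)
    (hφ : DifferentiableAt ℝ φ a) (hψ : DifferentiableAt ℝ ψ b) (hp : l < p) {δ : ℝ}
    (hlip : ‖∇ φ a - ∇ ψ b‖ ≤ l * (‖a - b‖ + δ)) :
    ‖a - b‖ ≤ l / (p - l) * δ := by
  have hgrad : ∇ φ a - ∇ ψ b = p • (b - a) := by
    rw [ha.gradient_eq hφ, hb.gradient_eq hψ]; module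
  have hscale : p * ‖a - b‖ ≤ l * (‖a - b‖ + δ) :=
    calc
      p * ‖a - b‖ ≤ |p| * ‖a - b‖ := by gcongr; exact le_abs_self p
      _ = ‖∇ φ a - ∇ ψ b‖ := by rw [hgrad, norm_smul, Real.norm_eq_abs, norm_sub_rev a b]
      _ ≤ _ := hlip
  rw [div_mul_eq_mul_div, le_div_iff₀ (sub_pos.2 hp)]
  linarith

end IsProxPoint

section MinimaxProblem

variable {E F : Type*} [NormedAddCommGroup E] [InnerProductSpace ℝ E] [CompleteSpace E]
  [NormedAddCommGroup F] [InnerProductSpace ℝ F] [CompleteSpace F]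
  {f : E → F → ℝ} {l μ p τ : ℝ} {y y' : F} {z a a' b : E}

theorem sq_norm_sub_le_of_polyakLojasiewicz (hp : l < p) (hμ : 0 < μ)
    (hdiff : Differentiable ℝ (f · y))
    (hlip : ∀ x, ‖∇ (f · y) x - ∇ (f · y) a‖ ≤ l * ‖x - a‖)
    (hbdd : BddAbove (Set.range (f b)))
    (hPL : 2 * μ * ((⨆ y', f a y') - f a y) ≤ ‖∇ (f a) y‖ ^ 2)
    (ha : IsProxPoint (f · y) p z a) (hb : IsProxPoint (fun x => ⨆ y', f x y') p z b) :
    ‖b - a‖ ^ 2 ≤ 1 / ((p - l) * μ) * ‖∇ (f a) y‖ ^ 2 := by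
  have hgap : (p - l) / 2 * ‖b - a‖ ^ 2 ≤ (⨆ y', f a y') - f a y :=
    ha.sq_norm_sub_le_gap hb hdiff hlip (le_ciSup hbdd y)
  rw [one_div_mul_eq_div, le_div_iff₀ (mul_pos (sub_pos.2 hp) hμ)]
  calc
    ‖b - a‖ ^ 2 * ((p - l) * μ) = 2 * μ * ((p - l) / 2 * ‖b - a‖ ^ 2) := by ring
    _ ≤ 2 * μ * ((⨆ y', f a y') - f a y) := by gcongr
    _ ≤ ‖∇ (f a) y‖ ^ 2 := hPL

theorem norm_gradient_le_of_isProxPoint (hl : 0 ≤ l) (hp : l < p)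
    (hdiff : DifferentiableAt ℝ (f · y) a) (hdiff' : DifferentiableAt ℝ (f · y') a')
    (hlipx : ‖∇ (f · y') a' - ∇ (f · y) a‖ ≤ l * (‖a' - a‖ + ‖y' - y‖))
    (hlipy : ‖∇ (f a') y' - ∇ (f a) y‖ ≤ l * (‖a' - a‖ + ‖y' - y‖))
    (ha : IsProxPoint (f · y) p z a) (ha' : IsProxPoint (f · y') p z a') :
    ‖∇ (f a') y'‖ ≤ ‖∇ (f a) y‖ + (l + l * l / (p - l)) * ‖y' - y‖ :=
  calc
    ‖∇ (f a') y'‖ ≤ ‖∇ (f a) y‖ + ‖∇ (f a') y' - ∇ (f a) y‖ := norm_le_norm_add_norm_sub' _ _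
    _ ≤ ‖∇ (f a) y‖ + l * (‖a' - a‖ + ‖y' - y‖) := by gcongr
    _ ≤ ‖∇ (f a) y‖ + l * (l / (p - l) * ‖y' - y‖ + ‖y' - y‖) := by
      gcongr
      exact ha'.norm_sub_le ha hdiff' hdiff hp hlipx
    _ = _ := by ring

theorem dual_ascent_error_bound_general (hl : 0 ≤ l) (hμ : 0 < μ)
    (hdiff : Differentiable ℝ (fun q : E × F => f q.1 q.2))
    (hlipx : ∀ x₁ x₂ y₁ y₂,
      ‖∇ (f · y₁) x₁ - ∇ (f · y₂) x₂‖ ≤ l * (‖x₁ - x₂‖ + ‖y₁ - y₂‖))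
    (hlipy : ∀ x₁ x₂ y₁ y₂,
      ‖∇ (f x₁) y₁ - ∇ (f x₂) y₂‖ ≤ l * (‖x₁ - x₂‖ + ‖y₁ - y₂‖))
    (hbdd : ∀ x, BddAbove (Set.range (f x)))
    (hPL : ∀ x y, 2 * μ * ((⨆ y', f x y') - f x y) ≤ ‖∇ (f x) y‖ ^ 2)
    (hp : l < p) (hτ : 0 ≤ τ) (ha : IsProxPoint (f · y) p z a)
    (ha' : IsProxPoint (f · (y + τ • ∇ (f a) y)) p z a')
    (hb : IsProxPoint (fun x => ⨆ y', f x y') p z b) :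
    ‖b - a'‖ ^ 2 ≤
      1 / ((p - l) * μ) * (1 + τ * l + τ * l * l / (p - l)) ^ 2 * ‖∇ (f a) y‖ ^ 2 := by
  set y' := y + τ • ∇ (f a) y with hy'
  have hdiffx (y : F) : Differentiable ℝ (f · y) :=
    hdiff.comp (differentiable_id.prodMk (differentiable_const y))
  have hstep : ‖y' - y‖ = τ * ‖∇ (f a) y‖ := by
    rw [hy', add_sub_cancel_left, norm_smul, Real.norm_of_nonneg hτ]
  have hgrad : ‖∇ (f a') y'‖ ≤ (1 + τ * l + τ * l * l / (p - l)) * ‖∇ (f a) y‖ := by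
    refine (norm_gradient_le_of_isProxPoint hl hp (hdiffx y a) (hdiffx y' a')
      (hlipx _ _ _ _) (hlipy _ _ _ _) ha ha').trans_eq ?_
    rw [hstep]
    ring
  have : 0 < p - l := sub_pos.2 hp
  calc
    ‖b - a'‖ ^ 2 ≤ 1 / ((p - l) * μ) * ‖∇ (f a') y'‖ ^ 2 :=
      sq_norm_sub_le_of_polyakLojasiewicz hp hμ (hdiffx y')
        (fun x => by simpa using hlipx x a' y' y') (hbdd b) (hPL a' y') ha' hb
    _ ≤ 1 / ((p - l) * μ) * ((1 + τ * l + τ * l * l / (p - l)) * ‖∇ (f a) y‖) ^ 2 := by gcongr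
    _ = _ := by ring

end MinimaxProblem

/-- **Lemma C.2 (error bound for the dual ascent step on the regularized problem).** For `p > l`,
with `f̂(x,y;z) = f(x,y) + (p/2)‖x − z‖²`, `x*(y,z)` the minimizer of `x ↦ f̂(x,y;z)`, `x*(z)`
the minimizer of `x ↦ max_y f̂(x,y;z)`, and `y⁺(z) = y + τ₂∇_y f̂(x*(y,z),y;z)`
(note `∇_y f̂ = ∇_y f`), one has
`‖x*(z) − x*(y⁺(z),z)‖² ≤ (1/((p−l)μ))(1 + τ₂l + τ₂l(p+l)/(p−l))²‖∇_y f̂(x*(y,z),y;z)‖²`. -/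
theorem dual_ascent_error_bound
    {d1 d2 : ℕ}
    (f : EuclideanSpace ℝ (Fin d1) → EuclideanSpace ℝ (Fin d2) → ℝ)
    (l μ : ℝ) (hl : 0 < l) (hμ : 0 < μ)
    (hdiff : Differentiable ℝ
      (fun q : EuclideanSpace ℝ (Fin d1) × EuclideanSpace ℝ (Fin d2) => f q.1 q.2))
    (hlipx : ∀ x₁ x₂ y₁ y₂,
      ‖gradx f x₁ y₁ - gradx f x₂ y₂‖ ≤ l * (‖x₁ - x₂‖ + ‖y₁ - y₂‖))
    (hlipy : ∀ x₁ x₂ y₁ y₂,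
      ‖grady f x₁ y₁ - grady f x₂ y₂‖ ≤ l * (‖x₁ - x₂‖ + ‖y₁ - y₂‖))
    (hattain : ∀ x, ∃ ys, ∀ y, f x y ≤ f x ys)
    (hPL : ∀ x y, 2 * μ * (primal f x - f x y) ≤ ‖grady f x y‖ ^ 2)
    (p τ2 : ℝ) (hp : l < p) (hτ2 : 0 < τ2)
    (X : EuclideanSpace ℝ (Fin d2) → EuclideanSpace ℝ (Fin d1) → EuclideanSpace ℝ (Fin d1))
    (hX : ∀ y z x, f (X y z) y + (p / 2) * ‖X y z - z‖ ^ 2 ≤ f x y + (p / 2) * ‖x - z‖ ^ 2)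
    (Xz : EuclideanSpace ℝ (Fin d1) → EuclideanSpace ℝ (Fin d1))
    (hXz : ∀ z x, (⨆ y, f (Xz z) y + (p / 2) * ‖Xz z - z‖ ^ 2) ≤
      ⨆ y, f x y + (p / 2) * ‖x - z‖ ^ 2) :
    ∀ y z,
      ‖Xz z - X (y + τ2 • grady f (X y z) y) z‖ ^ 2 ≤
        (1 / ((p - l) * μ)) * (1 + τ2 * l + τ2 * l * (p + l) / (p - l)) ^ 2 *
          ‖grady f (X y z) y‖ ^ 2 := by
  intro y z
  have hbdd (x) : BddAbove (Set.range (f x)) := (hattain x).elim fun ys hys =>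
    ⟨f x ys, Set.forall_mem_range.2 hys⟩
  have : 0 < p - l := sub_pos.2 hp
  refine (dual_ascent_error_bound_general hl.le hμ hdiff hlipx hlipy hbdd hPL hp hτ2.le (hX y z)
    (hX _ z) ((isProxPoint_iSup_iff hbdd).2 (hXz z))).trans ?_
  unfold grady
  gcongr
  linarith
end
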